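/- arXiv:2508.17141 — 2 statements merged into one kernel-verified Lean document; each statement's English description precedes it below -/
import Mathlib

section
/- The subsets M = {6,9,11,12,13,16,22,23,30,31,32,34,35,38,39,40,43,45,50,52,54,56,58,60,62,63,64,65,67,69,70,74,75,78,82,83,84,85,86,87,90,91,92,93,94,96,97,101,103,104,106,107,108,109,110} and N = {0,1,2,4,5,6,7,10,11,14,16,18,21,24,30,31,32,33,35,36,39,43,44,45,49,51,52,54,57,59,60,62,66,67,68,72,75,76,78,79,80,81,87,90,93,95,97,100,101,104,105,106,107,109,110} of ℤ/111ℤ form a Legendre pair of length 111: each has 55 elements, and for every nonzero c ∈ ℤ/111ℤ, #{(a,a') ∈ M × M : a − a' = c} + #{(b,b') ∈ N × N : b − b' = c} = 54. Moreover M is skew (0 ∉ M and i ∈ M implies −i ∉ M) and N is symmetric (−N = N). -/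
/-!
This is Szekeres' construction for `q = 223 = 4 * 55 + 3`. The nonzero squares of `𝔽_q` form a
cyclic group of order `111`, generated by `72`; writing `ψ a = 72 ^ a` and `χ` for the quadratic
character, `M` consists of the `a` with `χ (ψ a - 1) = 1` and `N` of the `a` with
`χ (ψ a + 1) = 1`. Since `χ (-1) = -1`, the sequence `χ (ψ a - 1)` is odd and `χ (ψ a + 1)` is
even, and every nonzero element of `𝔽_q` is `ψ a` or `-ψ a` for exactly one `a`. The sum of the
autocorrelations of the two sequences at a shift `c ≠ 0` is therefore a sum over `𝔽_q`, namely
`∑ x ≠ 0, χ (x - 1) * χ (x - ψ c)`, which equals `-1 - χ (ψ c) = -2`.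
-/

section LegendrePair

open Finset

theorem card_filter_sub_eq {G : Type*} [AddCommGroup G] [DecidableEq G] (X : Finset G) (c : G) :
    #{p ∈ X ×ˢ X | p.1 - p.2 = c} = #{a ∈ X | a - c ∈ X} := by
  refine card_nbij' Prod.fst (fun a ↦ (a, a - c)) ?_ ?_ ?_ ?_
  all_goals grind [Set.MapsTo, Set.LeftInvOn, sub_sub_cancel]

theorem two_mul_card_filter_eq_one {ι : Type*} [Fintype ι] {f : ι → ℤ}
    (hf : ∀ a, f a = 1 ∨ f a = -1) :
    2 * (#{a | f a = 1} : ℤ) = Fintype.card ι + ∑ a, f a := by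
  have indicator (a : ι) : 2 * (if f a = 1 then 1 else 0) = 1 + f a := by grind
  rw [natCast_card_filter, mul_sum, sum_congr rfl fun a _ ↦ indicator a]
  simp [sum_add_distrib]

variable {G : Type*} [AddCommGroup G] [Fintype G] [DecidableEq G]

/-- Legendre pairs in a finite abelian group `G`, whose order takes the place of the length `v`.
The sizes `(v - 1) / 2` and the difference counts `(v - 3) / 2` are encoded without division or
truncated subtraction. -/
structure IsLegendrePair (A B : Finset G) : Prop where
  card_left : 2 * #A + 1 = Fintype.card G
  card_right : 2 * #B + 1 = Fintype.card G
  card_sub_eq_add_card_sub_eq : ∀ c ≠ 0,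
    2 * (#{p ∈ A ×ˢ A | p.1 - p.2 = c} + #{p ∈ B ×ˢ B | p.1 - p.2 = c}) + 3 = Fintype.card G

/-- The periodic autocorrelation of a sequence indexed by `G`, at shift `c`. -/
def autocorr (f : G → ℤ) (c : G) : ℤ :=
  ∑ a, f a * f (a - c)

theorem autocorr_sub_single_zero {f : G → ℤ} (hf : f.Odd) {c : G} (hc : c ≠ 0) :
    autocorr (f - Pi.single 0 1) c = autocorr f c := by
  simp [autocorr, sub_mul, mul_sub, Pi.single_apply, sub_eq_zero, hf c, hc]

theorem four_mul_card_filter_sub_eq {f : G → ℤ} (hf : ∀ a, f a = 1 ∨ f a = -1) (c : G) :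
    4 * (#{p ∈ ({a | f a = 1} : Finset G) ×ˢ ({a | f a = 1} : Finset G) | p.1 - p.2 = c} : ℤ) =
      Fintype.card G + 2 * ∑ a, f a + autocorr f c := by
  have indicator (a : G) :
      4 * (if f a = 1 ∧ f (a - c) = 1 then 1 else 0) =
        1 + f a + f (a - c) + f a * f (a - c) := by
    have := hf a
    have := hf (a - c)
    grind
  have shift : ∑ a, f (a - c) = ∑ a, f a := (Equiv.subRight c).sum_comp f
  simp only [card_filter_sub_eq, mem_filter_univ, filter_filter]
  rw [natCast_card_filter, mul_sum, sum_congr rfl fun a _ ↦ indicator a]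
  simp only [sum_add_distrib, shift, autocorr, sum_const, card_univ, nsmul_eq_mul, mul_one]
  ring

theorem isLegendrePair_of_autocorr {f g : G → ℤ} (hf : ∀ a, f a = 1 ∨ f a = -1)
    (hg : ∀ a, g a = 1 ∨ g a = -1) (hf_sum : ∑ a, f a = -1) (hg_sum : ∑ a, g a = -1)
    (h : ∀ c ≠ 0, autocorr f c + autocorr g c = -2) :
    IsLegendrePair ({a | f a = 1} : Finset G) {a | g a = 1} where
  card_left := by have := two_mul_card_filter_eq_one hf; omega
  card_right := by have := two_mul_card_filter_eq_one hg; omega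
  card_sub_eq_add_card_sub_eq c hc := by
    have := four_mul_card_filter_sub_eq hf c
    have := four_mul_card_filter_sub_eq hg c
    have := h c hc
    omega

end LegendrePair

section QuadraticChar

variable {F : Type*} [Field F] [Fintype F] [DecidableEq F]

theorem sum_quadraticChar_sub_mul_quadraticChar_sub (hF : ringChar F ≠ 2) {a b : F}
    (hab : a ≠ b) : ∑ x, quadraticChar F (x - a) * quadraticChar F (x - b) = -1 := by
  set χ := quadraticChar F
  have hba : b - a ≠ 0 := sub_ne_zero.mpr hab.symm
  have hsq {x : F} (hx : x ≠ 0) : χ x * χ x = 1 := by rw [← sq, quadraticChar_sq_one hx]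
  calc ∑ x, χ (x - a) * χ (x - b)
      = ∑ y, χ ((b - a) * y + a - a) * χ ((b - a) * y + a - b) :=
        (((Equiv.mulLeft₀ _ hba).trans (Equiv.addRight a)).sum_comp
          fun x ↦ χ (x - a) * χ (x - b)).symm
    _ = ∑ y, χ (-1) * (χ y * χ (1 - y)) := by
        refine Finset.sum_congr rfl fun y _ ↦ ?_
        rw [show (b - a) * y + a - a = (b - a) * y by ring,
          show (b - a) * y + a - b = (b - a) * (-1 * (1 - y)) by ring]
        simp only [map_mul]
        linear_combination χ y * χ (-1) * χ (1 - y) * hsq hba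
    _ = χ (-1) * jacobiSum χ χ⁻¹ := by
        rw [(quadraticChar_isQuadratic F).inv, jacobiSum, Finset.mul_sum]
    _ = -1 := by
        rw [jacobiSum_nontrivial_inv (quadraticChar_ne_one hF), mul_neg, hsq (by simp)]

theorem ringChar_ne_two_of_odd_card {F : Type*} [Field F] [Fintype F]
    (hF : Odd (Fintype.card F)) : ringChar F ≠ 2 := by
  rwa [Ne, FiniteField.even_card_iff_char_two, ← Nat.even_iff, Nat.not_even_iff_odd]

theorem quadraticChar_neg_of_card_eq {n : ℕ} (hn : Odd n) (hF : Fintype.card F = 2 * n + 1)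
    (x : F) : quadraticChar F (-x) = -quadraticChar F x := by
  have neg_one : quadraticChar F (-1) = -1 := by
    rw [quadraticChar_neg_one (ringChar_ne_two_of_odd_card ⟨n, hF⟩)]
    exact ZMod.χ₄_nat_three_mod_four (by grind)
  rw [neg_eq_neg_one_mul, map_mul, neg_one, neg_one_mul]

theorem quadraticChar_addChar_of_odd_card {G : Type*} [AddCommGroup G] [Fintype G]
    (hG : Odd (Fintype.card G)) (ψ : AddChar G F) (a : G) : quadraticChar F (ψ a) = 1 := by
  rw [← (quadraticChar_isQuadratic F).pow_odd hG, MulChar.pow_apply' _ hG.pos.ne', ← map_pow,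
    ← AddChar.map_nsmul_eq_pow, card_nsmul_eq_zero, AddChar.map_zero_eq_one, map_one]

end QuadraticChar

section Szekeres

open Finset

variable {G F : Type*} [AddCommGroup G] [Fintype G] [Field F] [Fintype F] [DecidableEq F]

/-- The odd sequence of Szekeres' construction, with values in `{0, 1, -1}`. In the classical case
`G = ℤ/v` and `ψ a = g ^ (2 * a)` for a primitive root `g` of `F`. -/
def szekeresSkewSeq (ψ : AddChar G F) (a : G) : ℤ :=
  quadraticChar F (ψ a - 1)

/-- The even sequence of Szekeres' construction, with values in `{1, -1}` when `-1` is not a value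
of `ψ`. -/
def szekeresSymmSeq (ψ : AddChar G F) (a : G) : ℤ :=
  quadraticChar F (ψ a + 1)

/-- The skew Szekeres difference set attached to `ψ`. -/
def szekeresSkewSet (ψ : AddChar G F) : Finset G :=
  {a | szekeresSkewSeq ψ a = 1}

/-- The symmetric Szekeres difference set attached to `ψ`. -/
def szekeresSymmSet (ψ : AddChar G F) : Finset G :=
  {a | szekeresSymmSeq ψ a = 1}

variable (hG : Odd (Fintype.card G)) {ψ : AddChar G F}

include hG

theorem szekeresSkewSeq_sub (a c : G) :
    szekeresSkewSeq ψ (a - c) = quadraticChar F (ψ a - ψ c) := by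
  have : ψ a - ψ c = ψ c * (ψ (a - c) - 1) := by
    rw [mul_sub, ← AddChar.map_add_eq_mul, add_sub_cancel, mul_one]
  rw [this, map_mul, quadraticChar_addChar_of_odd_card hG, one_mul, szekeresSkewSeq]

theorem szekeresSymmSeq_sub (a c : G) :
    szekeresSymmSeq ψ (a - c) = quadraticChar F (ψ a + ψ c) := by
  have : ψ a + ψ c = ψ c * (ψ (a - c) + 1) := by
    rw [mul_add, ← AddChar.map_add_eq_mul, add_sub_cancel, mul_one]
  rw [this, map_mul, quadraticChar_addChar_of_odd_card hG, one_mul, szekeresSymmSeq]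

theorem szekeresSymmSeq_even : (szekeresSymmSeq ψ).Even := fun a ↦ by
  rw [← zero_sub, szekeresSymmSeq_sub hG, AddChar.map_zero_eq_one, add_comm, szekeresSymmSeq]

theorem image_neg_szekeresSymmSet [DecidableEq G] :
    (szekeresSymmSet ψ).image (fun a ↦ -a) = szekeresSymmSet ψ := by
  ext a
  simp [szekeresSymmSet, neg_eq_iff_eq_neg, szekeresSymmSeq_even hG a]

variable (hF : Fintype.card F = 2 * Fintype.card G + 1)

include hF

theorem szekeresSkewSeq_odd : (szekeresSkewSeq ψ).Odd := fun a ↦ by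
  rw [← zero_sub, szekeresSkewSeq_sub hG, AddChar.map_zero_eq_one, ← neg_sub,
    quadraticChar_neg_of_card_eq hG hF, szekeresSkewSeq]

theorem neg_notMem_szekeresSkewSet {a : G} (ha : a ∈ szekeresSkewSet ψ) :
    -a ∉ szekeresSkewSet ψ := by
  rw [szekeresSkewSet, mem_filter_univ] at ha ⊢
  rw [szekeresSkewSeq_odd hG hF, ha]
  decide

theorem szekeresSymmSeq_eq_one_or_neg_one (a : G) :
    szekeresSymmSeq ψ a = 1 ∨ szekeresSymmSeq ψ a = -1 := by
  refine quadraticChar_dichotomy fun h ↦ ?_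
  have := quadraticChar_addChar_of_odd_card hG ψ a
  rw [eq_neg_of_add_eq_zero_left h, quadraticChar_neg_of_card_eq hG hF, map_one] at this
  contradiction

variable (hψ : Function.Injective ψ)

include hψ

omit [DecidableEq F] in
theorem sum_eq_add_sum_addChar_add_neg (f : F → ℤ) :
    ∑ x, f x = f 0 + ∑ a, (f (ψ a) + f (-ψ a)) := by
  classical
  have ne_neg (a b : G) : ψ a ≠ -ψ b := fun h ↦ by
    have := congrArg (quadraticChar F) h
    rw [quadraticChar_neg_of_card_eq hG hF, quadraticChar_addChar_of_odd_card hG,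
      quadraticChar_addChar_of_odd_card hG] at this
    contradiction
  have ne_zero (a : G) : ψ a ≠ 0 := (ψ.val_isUnit a).ne_zero
  let e : Option (G ⊕ G) → F := fun o ↦ o.elim 0 (Sum.elim ψ fun a ↦ -ψ a)
  have e_injective : Function.Injective e := by
    rintro (_ | a | a) (_ | b | b) h
    all_goals simp_all [e, eq_comm, hψ.eq_iff]
  have e_bijective : Function.Bijective e := by
    rw [Fintype.bijective_iff_injective_and_card]
    refine ⟨e_injective, ?_⟩
    rw [Fintype.card_option, Fintype.card_sum, hF]
    ring
  rw [← e_bijective.sum_comp, Fintype.sum_option, Fintype.sum_sum_type, sum_add_distrib]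
  rfl

theorem sum_szekeresSymmSeq : ∑ a, szekeresSymmSeq ψ a = -1 := by
  set χ := quadraticChar F
  have hneg : ∀ x, χ (-x) = -χ x := quadraticChar_neg_of_card_eq hG hF
  have sum_mul : ∑ x, χ (x - 0) * χ (x - 1) = -1 :=
    sum_quadraticChar_sub_mul_quadraticChar_sub (ringChar_ne_two_of_odd_card ⟨_, hF⟩) zero_ne_one
  have term_zero : χ (0 - 0) * χ (0 - 1) = 0 := by
    rw [sub_zero, MulChar.map_zero, zero_mul]
  have terms (a : G) : χ (ψ a - 0) * χ (ψ a - 1) + χ (-ψ a - 0) * χ (-ψ a - 1) =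
      szekeresSkewSeq ψ a + szekeresSymmSeq ψ a := by
    rw [sub_zero, sub_zero, ← neg_add', hneg, hneg, neg_mul_neg,
      quadraticChar_addChar_of_odd_card hG, one_mul, one_mul, szekeresSkewSeq, szekeresSymmSeq]
  rwa [sum_eq_add_sum_addChar_add_neg hG hF hψ, term_zero, sum_congr rfl fun a _ ↦ terms a,
    sum_add_distrib, (szekeresSkewSeq_odd hG hF).sum_eq_zero, zero_add, zero_add] at sum_mul

theorem autocorr_szekeresSkewSeq_add_autocorr_szekeresSymmSeq {c : G} (hc : c ≠ 0) :
    autocorr (szekeresSkewSeq ψ) c + autocorr (szekeresSymmSeq ψ) c = -2 := by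
  set χ := quadraticChar F
  have hneg : ∀ x, χ (-x) = -χ x := quadraticChar_neg_of_card_eq hG hF
  have one_ne : 1 ≠ ψ c := by
    rw [← AddChar.map_zero_eq_one ψ]
    exact hψ.ne hc.symm
  have sum_mul : ∑ x, χ (x - 1) * χ (x - ψ c) = -1 :=
    sum_quadraticChar_sub_mul_quadraticChar_sub (ringChar_ne_two_of_odd_card ⟨_, hF⟩) one_ne
  have term_zero : χ (0 - 1) * χ (0 - ψ c) = 1 := by
    rw [zero_sub, zero_sub, hneg, hneg, map_one, quadraticChar_addChar_of_odd_card hG]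
    rfl
  have terms (a : G) :
      χ (ψ a - 1) * χ (ψ a - ψ c) + χ (-ψ a - 1) * χ (-ψ a - ψ c) =
        szekeresSkewSeq ψ a * szekeresSkewSeq ψ (a - c) +
          szekeresSymmSeq ψ a * szekeresSymmSeq ψ (a - c) := by
    rw [szekeresSkewSeq_sub hG, szekeresSymmSeq_sub hG, ← neg_add', ← neg_add', hneg, hneg,
      neg_mul_neg, szekeresSkewSeq, szekeresSymmSeq]
  rw [sum_eq_add_sum_addChar_add_neg hG hF hψ, term_zero, sum_congr rfl fun a _ ↦ terms a,
    sum_add_distrib] at sum_mul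
  rw [autocorr, autocorr]
  omega

theorem isLegendrePair_szekeres [DecidableEq G] :
    IsLegendrePair (szekeresSkewSet ψ) (szekeresSymmSet ψ) := by
  have hodd := szekeresSkewSeq_odd hG hF (ψ := ψ)
  -- Subtracting the point mass at `0` only replaces the value `0` of the odd sequence by `-1`.
  set f : G → ℤ := szekeresSkewSeq ψ - Pi.single 0 1 with hf_def
  have hf_zero : f 0 = -1 := by simp [hf_def, hodd.map_zero]
  have hf_ne {a : G} (ha : a ≠ 0) : f a = szekeresSkewSeq ψ a := by simp [hf_def, ha]
  have hf (a : G) : f a = 1 ∨ f a = -1 := by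
    obtain rfl | ha := eq_or_ne a 0
    · exact .inr hf_zero
    · rw [hf_ne ha]
      refine quadraticChar_dichotomy (sub_ne_zero.mpr ?_)
      rw [← AddChar.map_zero_eq_one ψ]
      exact hψ.ne ha
  have hf_sum : ∑ a, f a = -1 := by simp [hf_def, hodd.sum_eq_zero]
  have hf_set : ({a | f a = 1} : Finset G) = szekeresSkewSet ψ := by
    ext a
    obtain rfl | ha := eq_or_ne a 0
    · simp [szekeresSkewSet, hf_zero, hodd.map_zero]
    · simp [szekeresSkewSet, hf_ne ha]
  rw [← hf_set]
  refine isLegendrePair_of_autocorr hf (szekeresSymmSeq_eq_one_or_neg_one hG hF) hf_sum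
    (sum_szekeresSymmSeq hG hF hψ) fun c hc ↦ ?_
  rw [autocorr_sub_single_zero hodd hc]
  exact autocorr_szekeresSkewSeq_add_autocorr_szekeresSymmSeq hG hF hψ hc

end Szekeres

theorem zmodChar_injective {v : ℕ} [NeZero v] {R : Type*} [CommMonoid R] {ζ : R}
    (hζ : IsPrimitiveRoot ζ v) : Function.Injective (AddChar.zmodChar v hζ.pow_eq_one) :=
  fun a b h ↦ ZMod.val_injective v (hζ.pow_inj a.val_lt b.val_lt h)

instance fact_prime_twoHundredTwentyThree : Fact (Nat.Prime 223) := ⟨by norm_num⟩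

theorem isPrimitiveRoot_seventyTwo : IsPrimitiveRoot (72 : ZMod 223) 111 := by
  have pow_ne_one : ∀ l < 111, 0 < l → (72 : ZMod 223) ^ l ≠ 1 := by decide +kernel
  exact .mk_of_lt _ (by norm_num) (by decide +kernel) fun l hl hlt ↦ pow_ne_one l hlt hl

/-- The Szekeres difference sets `M` and `N` form a Legendre pair of length
`111`, with `M` skew and `N` symmetric. -/
theorem szekeres_legendre_pair_111 :
    let M : Finset (ZMod 111) :=
      {6,9,11,12,13,16,22,23,30,31,32,34,35,38,39,40,43,45,50,52,54,56,58,
       60,62,63,64,65,67,69,70,74,75,78,82,83,84,85,86,87,90,91,92,93,94,96,97,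
       101,103,104,106,107,108,109,110}
    let N : Finset (ZMod 111) :=
      {0,1,2,4,5,6,7,10,11,14,16,18,21,24,30,31,32,33,35,36,39,43,44,45,49,
       51,52,54,57,59,60,62,66,67,68,72,75,76,78,79,80,81,87,90,93,95,97,100,
       101,104,105,106,107,109,110}
    M.card = 55 ∧ N.card = 55 ∧
    (∀ c : ZMod 111, c ≠ 0 →
      ((M ×ˢ M).filter (fun p => p.1 - p.2 = c)).card +
      ((N ×ˢ N).filter (fun p => p.1 - p.2 = c)).card = 54) ∧
    ((0 : ZMod 111) ∉ M ∧ ∀ i ∈ M, -i ∉ M) ∧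
    N.image (fun x => -x) = N := by
  intro M N
  let ψ : AddChar (ZMod 111) (ZMod 223) :=
    AddChar.zmodChar 111 isPrimitiveRoot_seventyTwo.pow_eq_one
  have hG : Odd (Fintype.card (ZMod 111)) := by rw [ZMod.card]; decide
  have hF : Fintype.card (ZMod 223) = 2 * Fintype.card (ZMod 111) + 1 := by simp only [ZMod.card]
  have hM : M = szekeresSkewSet ψ := by decide +kernel
  have hN : N = szekeresSymmSet ψ := by decide +kernel
  have hMN : IsLegendrePair M N := by
    rw [hM, hN]
    exact isLegendrePair_szekeres hG hF (zmodChar_injective isPrimitiveRoot_seventyTwo)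
  have skew : ∀ i ∈ M, -i ∉ M := by
    rw [hM]
    exact fun i ↦ neg_notMem_szekeresSkewSet hG hF
  have hcardM := hMN.card_left
  have hcardN := hMN.card_right
  rw [ZMod.card] at hcardM hcardN
  refine ⟨by omega, by omega, fun c hc ↦ ?_, ⟨fun h ↦ skew 0 h (by rwa [neg_zero]), skew⟩, ?_⟩
  · have := hMN.card_sub_eq_add_card_sub_eq c hc
    rw [ZMod.card] at this
    omega
  · rw [hN]
    exact image_neg_szekeresSymmSet hG
end

section
/- There exists a Legendre pair (A, B) of length 111 such that both blocks are invariant under multiplication by 10, i.e. 10·A = A and 10·B = B as subsets of ℤ/111ℤ (equivalently, A and B are unions of orbits of the subgroup H = {1, 10, 100} of the unit group of ℤ/111ℤ acting by multiplication). -/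
/-!
Let `H = {1, 10, 100}`. If `A` is a union of `H`-orbits, the number of representations of `c` as a
difference of two elements of `A` does not change when `c` is multiplied by an element of `H` or
replaced by `-c`. For blocks that are unions of `H`-orbits, the Legendre condition therefore only
has to be verified at one `c` from each of the `19` nonzero orbits of `±H` on `ℤ/111ℤ`.
-/

open Finset
open scoped Pointwise

theorem smul_finset_eq_self_of_forall_smul_mem {M α : Type*} [Group M] [MulAction M α]
    [DecidableEq α] {u : M} {S : Finset α} (h : ∀ x ∈ S, u • x ∈ S) : u • S = S :=
  eq_of_subset_of_card_le (image_subset_iff.mpr h) (card_smul_finset u S).ge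

section AddConvolution

variable {M G : Type*} [Group M] [AddGroup G] [DistribMulAction M G] [DecidableEq G]

theorem addConvolution_smul_smul (u : M) (A B : Finset G) (x : G) :
    (u • A).addConvolution (u • B) (u • x) = A.addConvolution B x := by
  have smul_vadd_eq (C : Finset G) : (u • x) +ᵥ u • C = u • (x +ᵥ C) := by
    simp only [← image_vadd, ← image_smul, image_image, Function.comp_def, vadd_eq_add, smul_add]
  rw [← card_inter_vadd_neg, ← card_inter_vadd_neg, ← smul_finset_neg, smul_vadd_eq,
    ← smul_finset_inter, card_smul_finset]

theorem addConvolution_neg_self_smul {u : M} {A : Finset G} (hA : u • A = A) (x : G) :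
    A.addConvolution (-A) (u • x) = A.addConvolution (-A) x := by
  simpa only [smul_finset_neg, hA] using addConvolution_smul_smul u A (-A) x

end AddConvolution

section LegendrePair

variable {v : ℕ} {A B : Finset (ZMod v)}

/-- A Legendre pair of length `v`. The number of representations of `c` as a difference of two
elements of `A` is `A.addConvolution (-A) c`. The cardinalities `(v - 1) / 2` and the constant
`(v - 3) / 2` are encoded without subtraction or division; in particular `v` is odd. -/
structure IsLegendrePair_s14 (A B : Finset (ZMod v)) : Prop where
  two_mul_card_left_add_one : 2 * #A + 1 = v
  two_mul_card_right_add_one : 2 * #B + 1 = v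
  two_mul_addConvolution_add_three : ∀ c ≠ 0,
    2 * (A.addConvolution (-A) c + B.addConvolution (-B) c) + 3 = v

theorem IsLegendrePair_s14.of_forall_mem_representatives {H : Finset (ZMod v)ˣ} {T : Finset (ZMod v)}
    (hA : 2 * #A + 1 = v) (hB : 2 * #B + 1 = v)
    (smul_A : ∀ u ∈ H, u • A = A) (smul_B : ∀ u ∈ H, u • B = B)
    (cover : ∀ c ≠ 0, c ∈ H • T ∪ -(H • T))
    (hT : ∀ t ∈ T, 2 * (A.addConvolution (-A) t + B.addConvolution (-B) t) + 3 = v) :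
    IsLegendrePair_s14 A B := by
  have orbit_eq : ∀ c ∈ H • T, 2 * (A.addConvolution (-A) c + B.addConvolution (-B) c) + 3 = v := by
    intro c hc
    obtain ⟨u, hu, t, ht, rfl⟩ := mem_smul.mp hc
    rw [addConvolution_neg_self_smul (smul_A u hu), addConvolution_neg_self_smul (smul_B u hu)]
    exact hT t ht
  refine ⟨hA, hB, fun c hc ↦ ?_⟩
  rcases mem_union.mp (cover c hc) with pos | neg
  · exact orbit_eq c pos
  · simpa only [addConvolution_neg, neg_neg] using orbit_eq (-c) (mem_neg'.mp neg)

end LegendrePair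

namespace LegendrePair111

/-- `10` as a unit of `ℤ/111ℤ`. -/
def ten : (ZMod 111)ˣ := ⟨10, 100, by decide, by decide⟩

/-- The subgroup `{1, 10, 100}` of units, as a finset, so that unions of its orbits can be written
`H • R`; note `100 = 10⁻¹`. -/
def H : Finset (ZMod 111)ˣ := {1, ten, ten⁻¹}

/-- The first block: the union of the `H`-orbits of the listed least representatives, a witness
found by computer. -/
def blockA : Finset (ZMod 111) :=
  H • {0, 1, 2, 3, 4, 7, 11, 14, 15, 16, 18, 27, 31, 32, 41, 44, 52, 62, 63}

/-- The second block, in the same encoding as `blockA`. -/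
def blockB : Finset (ZMod 111) :=
  H • {0, 3, 5, 6, 7, 8, 11, 16, 18, 26, 27, 41, 43, 51, 52, 54, 55, 62, 63}

/-- The least representatives of the nonzero orbits of `±H` on `ℤ/111ℤ`. -/
def orbitReps : Finset (ZMod 111) :=
  {1, 2, 3, 4, 5, 6, 7, 8, 9, 13, 14, 15, 16, 17, 18, 25, 26, 27, 37}

theorem mul_mem_H : ∀ u ∈ H, ∀ w ∈ H, u * w ∈ H := by
  have ten_mul_ten : ten * ten = ten⁻¹ := by decide +kernel
  have inv_mul_inv : ten⁻¹ * ten⁻¹ = ten := by rw [← mul_inv_rev, ten_mul_ten, inv_inv]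
  simp [H, ten_mul_ten, inv_mul_inv]

theorem smul_H_smul {u : (ZMod 111)ˣ} (hu : u ∈ H) (R : Finset (ZMod 111)) :
    u • (H • R) = H • R := by
  rw [← smul_assoc, smul_finset_eq_self_of_forall_smul_mem (mul_mem_H u hu)]

theorem ten_smul_H_smul (R : Finset (ZMod 111)) : ten • (H • R) = H • R :=
  smul_H_smul (by decide) R

theorem mem_H_smul_orbitReps_union_neg :
    ∀ c : ZMod 111, c ≠ 0 → c ∈ H • orbitReps ∪ -(H • orbitReps) := by
  decide +kernel

theorem two_mul_addConvolution_add_three_of_mem_orbitReps :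
    ∀ t ∈ orbitReps,
      2 * (blockA.addConvolution (-blockA) t + blockB.addConvolution (-blockB) t) + 3 = 111 := by
  decide +kernel

theorem isLegendrePair : IsLegendrePair_s14 blockA blockB :=
  .of_forall_mem_representatives (by decide +kernel) (by decide +kernel)
    (fun _ hu ↦ smul_H_smul hu _) (fun _ hu ↦ smul_H_smul hu _)
    mem_H_smul_orbitReps_union_neg two_mul_addConvolution_add_three_of_mem_orbitReps

end LegendrePair111

/-- There exists a Legendre pair `(A, B)` of length `111` both of whose blocks
are invariant under multiplication by `10` (equivalently, are unions of orbits
of the subgroup `{1, 10, 100}` of units of `ℤ/111ℤ`). -/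
theorem exists_H_invariant_legendre_pair_111 :
    ∃ A B : Finset (ZMod 111),
      A.card = 55 ∧ B.card = 55 ∧
      (∀ c : ZMod 111, c ≠ 0 →
        ((A ×ˢ A).filter (fun p => p.1 - p.2 = c)).card +
        ((B ×ˢ B).filter (fun p => p.1 - p.2 = c)).card = 54) ∧
      A.image (fun x => 10 * x) = A ∧
      B.image (fun x => 10 * x) = B := by
  obtain ⟨card_A, card_B, difference_count⟩ := LegendrePair111.isLegendrePair
  refine ⟨LegendrePair111.blockA, LegendrePair111.blockB, by lia, by lia, fun c hc ↦ ?_,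
    LegendrePair111.ten_smul_H_smul _, LegendrePair111.ten_smul_H_smul _⟩
  rw [card_sub_eq, card_sub_eq]
  have count_c := difference_count c hc
  lia
end
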